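/- Substitution lemma for the weight, !-case: let V be a well-formed closed SHOπ value (⊩ V) and n ≥ m ≥ 1 natural numbers. If Γ,!x ⊩ R is a well-formed SHOπ process judgement, then W_m(R[V/x]) ≤ W_n(R) + n·W_n(V); likewise if Γ,!x ⊩ W is a well-formed value judgement, then W_m(W[V/x]) ≤ W_n(W) + n·W_n(V). -/

import Mathlib

/-! The weight is insensitive to lifting and monotone in its parameter, so a substituted copy of the
value contributes its weight once for every occurrence of `x`, multiplied by `n` for each enclosing
box. In a well-formed subject that coefficient is determined by the marker of `x`: `0` when `x` is
absent, `1` when it is linear and `n` when it is !-marked. Call this number `markCost n e`. It is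
additive under context splitting (`splitE_cost`) and multiplied by `n` when a box is entered
(`bangE_cost`). A single mutual induction on the syntax (`wV_subst`, `wP_subst`) then treats all
three cases at an arbitrary de Bruijn index; the theorem is the !-marked case at index `0`. -/

/-! Syntax of LHOπ / SHOπ processes and values (variables in de Bruijn style,
channels as names). -/

mutual
inductive Val : Type
  | star : Val
  | var : ℕ → Val
  | lam : Proc → Val
  | blam : Proc → Val
  | bang : Val → Val
inductive Proc : Type
  | nil : Proc
  | par : Proc → Proc → Proc
  | inp : ℕ → Proc → Proc
  | binp : ℕ → Proc → Proc
  | out : ℕ → Val → Proc → Proc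
  | nu : ℕ → Proc → Proc
  | app : Val → Val → Proc
end

/-! Lifting and capture-avoiding substitution. -/

mutual
def liftV (c : ℕ) : Val → Val
  | .star => .star
  | .var x => if x < c then .var x else .var (x + 1)
  | .lam P => .lam (liftP (c + 1) P)
  | .blam P => .blam (liftP (c + 1) P)
  | .bang V => .bang (liftV c V)
def liftP (c : ℕ) : Proc → Proc
  | .nil => .nil
  | .par P Q => .par (liftP c P) (liftP c Q)
  | .inp a P => .inp a (liftP (c + 1) P)
  | .binp a P => .binp a (liftP (c + 1) P)
  | .out a V P => .out a (liftV c V) (liftP c P)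
  | .nu a P => .nu a (liftP c P)
  | .app V W => .app (liftV c V) (liftV c W)
end

mutual
def substV (U : Val) (k : ℕ) : Val → Val
  | .star => .star
  | .var x => if x = k then U else if x < k then .var x else .var (x - 1)
  | .lam P => .lam (substP (liftV 0 U) (k + 1) P)
  | .blam P => .blam (substP (liftV 0 U) (k + 1) P)
  | .bang V => .bang (substV U k V)
def substP (U : Val) (k : ℕ) : Proc → Proc
  | .nil => .nil
  | .par P Q => .par (substP U k P) (substP U k Q)
  | .inp a P => .inp a (substP (liftV 0 U) (k + 1) P)
  | .binp a P => .binp a (substP (liftV 0 U) (k + 1) P)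
  | .out a V P => .out a (substV U k V) (substP U k P)
  | .nu a P => .nu a (substP U k P)
  | .app V W => .app (substV U k V) (substV U k W)
end

/-! Free channels and channel renaming (for α-conversion of restrictions). -/

mutual
def fcV : Val → Finset ℕ
  | .star => ∅
  | .var _ => ∅
  | .lam P => fcP P
  | .blam P => fcP P
  | .bang V => fcV V
def fcP : Proc → Finset ℕ
  | .nil => ∅
  | .par P Q => fcP P ∪ fcP Q
  | .inp a P => insert a (fcP P)
  | .binp a P => insert a (fcP P)
  | .out a V P => insert a (fcV V ∪ fcP P)
  | .nu a P => fcP P \ {a}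
  | .app V W => fcV V ∪ fcV W
end

mutual
def chV (a b : ℕ) : Val → Val
  | .star => .star
  | .var x => .var x
  | .lam P => .lam (chP a b P)
  | .blam P => .blam (chP a b P)
  | .bang V => .bang (chV a b V)
def chP (a b : ℕ) : Proc → Proc
  | .nil => .nil
  | .par P Q => .par (chP a b P) (chP a b Q)
  | .inp c P => .inp (if c = a then b else c) (chP a b P)
  | .binp c P => .binp (if c = a then b else c) (chP a b P)
  | .out c V P => .out (if c = a then b else c) (chV a b V) (chP a b P)
  | .nu c P => if c = a then .nu c P else .nu c (chP a b P)
  | .app V W => .app (chV a b V) (chV a b W)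
end

/-! Structural congruence: the smallest congruence containing α-equivalence
(for channel restrictions; α-equivalence of variables is syntactic identity in
de Bruijn style), associativity and commutativity of parallel composition,
exchange of restrictions, and scope extrusion.  No garbage-collection laws. -/

mutual
inductive SCV : Val → Val → Prop
  | refl (V) : SCV V V
  | symm : SCV V W → SCV W V
  | trans : SCV U V → SCV V W → SCV U W
  | lam : SCP P Q → SCV (.lam P) (.lam Q)
  | blam : SCP P Q → SCV (.blam P) (.blam Q)
  | bang : SCV V W → SCV (.bang V) (.bang W)
inductive SCP : Proc → Proc → Prop
  | refl (P) : SCP P P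
  | symm : SCP P Q → SCP Q P
  | trans : SCP P Q → SCP Q R → SCP P R
  | par : SCP P P' → SCP Q Q' → SCP (.par P Q) (.par P' Q')
  | inp : SCP P Q → SCP (.inp a P) (.inp a Q)
  | binp : SCP P Q → SCP (.binp a P) (.binp a Q)
  | out : SCV V W → SCP P Q → SCP (.out a V P) (.out a W Q)
  | nu : SCP P Q → SCP (.nu a P) (.nu a Q)
  | app : SCV V V' → SCV W W' → SCP (.app V W) (.app V' W')
  | assoc : SCP (.par P (.par Q R)) (.par (.par P Q) R)
  | comm : SCP (.par P Q) (.par Q P)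
  | nuswap : SCP (.nu a (.nu b P)) (.nu b (.nu a P))
  | extrude : a ∉ fcP Q → SCP (.nu a (.par P Q)) (.par (.nu a P) Q)
  | alpha : b ∉ fcP P → SCP (.nu a P) (.nu b (chP a b P))
end

/-! Reduction. -/

inductive Red : Proc → Proc → Prop
  | comm : Red (.par (.out a V P) (.inp a Q)) (.par P (substP V 0 Q))
  | bcomm : Red (.par (.out a (.bang V) P) (.binp a Q)) (.par P (substP V 0 Q))
  | beta : Red (.app (.lam P) V) (substP V 0 P)
  | bbeta : Red (.app (.blam P) (.bang V)) (substP V 0 P)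
  | parL : Red P Q → Red (.par P R) (.par Q R)
  | res : Red P Q → Red (.nu a P) (.nu a Q)
  | struct : SCP P P' → Red P' Q' → SCP Q' Q → Red P Q

/-- `m`-step reduction. -/
inductive RedN : ℕ → Proc → Proc → Prop
  | zero : RedN 0 P P
  | succ : Red P Q → RedN n Q R → RedN (n + 1) P R

/-! SHOπ well-formation.  A context entry is `none` (absent) or a marker:
linear `x`, nonlinear `!x`, or nonlinear `§x`. -/

inductive SMark : Type
  | lin : SMark
  | bang : SMark
  | para : SMark
deriving DecidableEq

abbrev Ctx := List (Option SMark)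

/-- Contexts made only of §-marked (or absent) variables: these admit
weakening. -/
def ParaOnly (Γ : Ctx) : Prop := ∀ e ∈ Γ, e = none ∨ e = some .para

/-- Splitting one context entry between the two premises of a binary rule:
linear and !-variables go to exactly one premise, §-variables may be shared
(implicit contraction). -/
inductive SplitE : Option SMark → Option SMark → Option SMark → Prop
  | none : SplitE none none none
  | linL : SplitE (some .lin) (some .lin) none
  | linR : SplitE (some .lin) none (some .lin)
  | bangL : SplitE (some .bang) (some .bang) none
  | bangR : SplitE (some .bang) none (some .bang)
  | paraL : SplitE (some .para) (some .para) none
  | paraR : SplitE (some .para) none (some .para)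
  | paraB : SplitE (some .para) (some .para) (some .para)

inductive Split : Ctx → Ctx → Ctx → Prop
  | nil : Split [] [] []
  | cons : SplitE e e₁ e₂ → Split Γ Γ₁ Γ₂ → Split (e :: Γ) (e₁ :: Γ₁) (e₂ :: Γ₂)

/-- Entry-wise relation between the context of `V` and the context of `!V`:
linear variables become !-marked ones, and weakening by §-variables is
allowed.  §- and !-variables may not appear inside a !-box. -/
inductive BangE : Option SMark → Option SMark → Prop
  | lin : BangE (some .lin) (some .bang)
  | none : BangE none none
  | para : BangE none (some .para)

inductive BangCtx : Ctx → Ctx → Prop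
  | nil : BangCtx [] []
  | cons : BangE e e' → BangCtx Γ Γ' → BangCtx (e :: Γ) (e' :: Γ')

mutual
inductive WfV : Ctx → Val → Prop
  | star : ParaOnly Γ → WfV Γ .star
  | varLin : ParaOnly Γ → WfV (some .lin :: Γ) (.var 0)
  | varPara : ParaOnly Γ → WfV (some .para :: Γ) (.var 0)
  | varThere : (e = none ∨ e = some SMark.para) → WfV Γ (.var x) →
      WfV (e :: Γ) (.var (x + 1))
  | lam : WfP (some .lin :: Γ) P → WfV Γ (.lam P)
  | blamBang : WfP (some .bang :: Γ) P → WfV Γ (.blam P)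
  | blamPara : WfP (some .para :: Γ) P → WfV Γ (.blam P)
  | bang : BangCtx Γ Δ → WfV Γ V → WfV Δ (.bang V)
inductive WfP : Ctx → Proc → Prop
  | nil : ParaOnly Γ → WfP Γ .nil
  | par : Split Γ Γ₁ Γ₂ → WfP Γ₁ P → WfP Γ₂ Q → WfP Γ (.par P Q)
  | inp : WfP (some .lin :: Γ) P → WfP Γ (.inp a P)
  | binpBang : WfP (some .bang :: Γ) P → WfP Γ (.binp a P)
  | binpPara : WfP (some .para :: Γ) P → WfP Γ (.binp a P)
  | out : Split Γ Γ₁ Γ₂ → WfV Γ₁ V → WfP Γ₂ P → WfP Γ (.out a V P)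
  | nu : WfP Γ P → WfP Γ (.nu a P)
  | app : Split Γ Γ₁ Γ₂ → WfV Γ₁ V → WfV Γ₂ W → WfP Γ (.app V W)
end

/-! Measures: size, box depth, free occurrences, duplicability factor,
parametrized weight, weight. -/

mutual
def sizeV : Val → ℕ
  | .star => 1
  | .var _ => 1
  | .lam P => sizeP P + 1
  | .blam P => sizeP P + 1
  | .bang V => sizeV V + 1
def sizeP : Proc → ℕ
  | .nil => 1
  | .par P Q => sizeP P + sizeP Q + 1
  | .inp _ P => sizeP P + 1
  | .binp _ P => sizeP P + 1
  | .out _ V P => sizeV V + sizeP P + 1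
  | .nu _ P => sizeP P + 1
  | .app V W => sizeV V + sizeV W + 1
end

mutual
def bdV : Val → ℕ
  | .star => 0
  | .var _ => 0
  | .lam P => bdP P
  | .blam P => bdP P
  | .bang V => bdV V + 1
def bdP : Proc → ℕ
  | .nil => 0
  | .par P Q => max (bdP P) (bdP Q)
  | .inp _ P => bdP P
  | .binp _ P => bdP P
  | .out _ V P => max (bdV V) (bdP P)
  | .nu _ P => bdP P
  | .app V W => max (bdV V) (bdV W)
end

-- Number of free occurrences of the variable (de Bruijn index) `k`.
mutual
def foV (k : ℕ) : Val → ℕ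
  | .star => 0
  | .var x => if x = k then 1 else 0
  | .lam P => foP (k + 1) P
  | .blam P => foP (k + 1) P
  | .bang V => foV k V
def foP (k : ℕ) : Proc → ℕ
  | .nil => 0
  | .par P Q => foP k P + foP k Q
  | .inp _ P => foP (k + 1) P
  | .binp _ P => foP (k + 1) P
  | .out _ V P => foV k V + foP k P
  | .nu _ P => foP k P
  | .app V W => foV k V + foV k W
end

-- Duplicability factor.
mutual
def dV : Val → ℕ
  | .star => 1
  | .var _ => 1
  | .lam P => max (dP P) (foP 0 P)
  | .blam P => max (dP P) (foP 0 P)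
  | .bang V => dV V
def dP : Proc → ℕ
  | .nil => 1
  | .par P Q => max (dP P) (dP Q)
  | .inp _ P => max (dP P) (foP 0 P)
  | .binp _ P => max (dP P) (foP 0 P)
  | .out _ V P => max (dV V) (dP P)
  | .nu _ P => dP P
  | .app V W => max (dV V) (dV W)
end

-- `n`-parametrized weight.
mutual
def wV (n : ℕ) : Val → ℕ
  | .star => 1
  | .var _ => 1
  | .lam P => wP n P
  | .blam P => wP n P
  | .bang V => n * wV n V + 1
def wP (n : ℕ) : Proc → ℕ
  | .nil => 1
  | .par P Q => wP n P + wP n Q + 1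
  | .inp _ P => wP n P + 1
  | .binp _ P => wP n P + 1
  | .out _ V P => wV n V + wP n P
  | .nu _ P => wP n P
  | .app V W => wV n V + wV n W + 1
end

/-- The weight of a process. -/
def weightP (P : Proc) : ℕ := wP (dP P) P
/-- The weight of a value. -/
def weightV (V : Val) : ℕ := wV (dV V) V

/-! ### Weight under lifting and change of parameter -/

mutual
theorem wV_lift (n c : ℕ) : (V : Val) → wV n (liftV c V) = wV n V
  | .star => by simp [liftV]
  | .var x => by simp only [liftV]; split <;> simp [wV]
  | .lam P => by simp [liftV, wV, wP_lift n (c + 1) P]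
  | .blam P => by simp [liftV, wV, wP_lift n (c + 1) P]
  | .bang V => by simp [liftV, wV, wV_lift n c V]
theorem wP_lift (n c : ℕ) : (P : Proc) → wP n (liftP c P) = wP n P
  | .nil => by simp [liftP]
  | .par P Q => by simp [liftP, wP, wP_lift n c P, wP_lift n c Q]
  | .inp a P => by simp [liftP, wP, wP_lift n (c + 1) P]
  | .binp a P => by simp [liftP, wP, wP_lift n (c + 1) P]
  | .out a V P => by simp [liftP, wP, wV_lift n c V, wP_lift n c P]
  | .nu a P => by simp [liftP, wP, wP_lift n c P]
  | .app V W => by simp [liftP, wP, wV_lift n c V, wV_lift n c W]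
end

mutual
theorem wV_mono {m n : ℕ} (h : m ≤ n) : (V : Val) → wV m V ≤ wV n V
  | .star => by simp [wV]
  | .var x => by simp [wV]
  | .lam P => by simpa only [wV] using wP_mono h P
  | .blam P => by simpa only [wV] using wP_mono h P
  | .bang V => by
      simp only [wV]
      exact Nat.succ_le_succ (Nat.mul_le_mul h (wV_mono h V))
theorem wP_mono {m n : ℕ} (h : m ≤ n) : (P : Proc) → wP m P ≤ wP n P
  | .nil => by simp [wP]
  | .par P Q => by
      have h1 := wP_mono h P
      have h2 := wP_mono h Q
      simp only [wP]; omega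
  | .inp a P => by
      have h1 := wP_mono h P
      simp only [wP]; omega
  | .binp a P => by
      have h1 := wP_mono h P
      simp only [wP]; omega
  | .out a V P => by
      have h1 := wV_mono h V
      have h2 := wP_mono h P
      simp only [wP]; omega
  | .nu a P => by simpa only [wP] using wP_mono h P
  | .app V W => by
      have h1 := wV_mono h V
      have h2 := wV_mono h W
      simp only [wP]; omega
end

/-! ### Context entries and weighted occurrence counts -/

/-- The entry of a context at index `k`; positions beyond its length count as absent. -/
def entry (Γ : Ctx) (k : ℕ) : Option SMark := Γ[k]?.getD none

/-- The number of occurrences of a variable with the given entry, each weighted by `n` to the power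
of its depth. The entry `some .para` puts no bound on occurrences; its value `0` is junk, and that
entry is excluded wherever `markCost` is used. -/
def markCost (n : ℕ) : Option SMark → ℕ
  | some .lin => 1
  | some .bang => n
  | _ => 0

@[simp] theorem entry_succ (e : Option SMark) (Γ : Ctx) (k : ℕ) :
    entry (e :: Γ) (k + 1) = entry Γ k := by simp [entry]

@[simp] theorem entry_zero (e : Option SMark) (Γ : Ctx) : entry (e :: Γ) 0 = e := by simp [entry]

theorem split_entry {Γ Γ₁ Γ₂ : Ctx} (h : Split Γ Γ₁ Γ₂) (k : ℕ) :
    SplitE (entry Γ k) (entry Γ₁ k) (entry Γ₂ k) := by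
  induction h generalizing k with
  | nil => simpa [entry] using SplitE.none
  | cons he _ ih =>
    cases k with
    | zero => simpa using he
    | succ k => simpa using ih k

theorem bangCtx_entry {Γ Δ : Ctx} (h : BangCtx Γ Δ) (k : ℕ) :
    BangE (entry Γ k) (entry Δ k) := by
  induction h generalizing k with
  | nil => simpa [entry] using BangE.none
  | cons he _ ih =>
    cases k with
    | zero => simpa using he
    | succ k => simpa using ih k

theorem splitE_cost (n : ℕ) {e e₁ e₂ : Option SMark} (h : SplitE e e₁ e₂)
    (he : e ≠ some .para) :
    e₁ ≠ some .para ∧ e₂ ≠ some .para ∧ markCost n e = markCost n e₁ + markCost n e₂ := by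
  cases h <;> simp_all [markCost]

theorem bangE_cost (n : ℕ) {e e' : Option SMark} (h : BangE e e') :
    e ≠ some .para ∧ markCost n e' = n * markCost n e := by
  cases h <;> simp [markCost]

/-- A variable used at index `x` is linear or §-marked there, which excludes the absent and
!-marked entries. -/
theorem wfV_var_entry {Γ : Ctx} {x : ℕ} (h : WfV Γ (.var x)) :
    entry Γ x = some .lin ∨ entry Γ x = some .para := by
  induction x generalizing Γ with
  | zero => cases h <;> simp
  | succ x ih =>
    cases h with
    | varThere _ h => simpa using ih h

/-! ### The substitution bound -/

mutual
theorem wV_subst {m n : ℕ} (hmn : m ≤ n) : (W : Val) → (U : Val) → (k : ℕ) → (Γ : Ctx) →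
    WfV Γ W → entry Γ k ≠ some .para →
    wV m (substV U k W) ≤ wV n W + markCost n (entry Γ k) * wV n U
  | .star, U, k, Γ, _, _ => by simp [substV, wV]
  | .var x, U, k, Γ, h, hk => by
      by_cases hx : x = k
      · subst hx
        have hl := (wfV_var_entry h).resolve_right hk
        have hU := wV_mono hmn U
        simp only [substV, if_true, hl, markCost, wV]
        omega
      · simp only [substV, if_neg hx]
        split <;> simp [wV]
  | .lam P, U, k, Γ, h, hk => by
      cases h with
      | lam h =>
        simpa [substV, wV, wV_lift] using
          wP_subst hmn P (liftV 0 U) (k + 1) _ h (by simpa using hk)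
  | .blam P, U, k, Γ, h, hk => by
      cases h with
      | blamBang h | blamPara h =>
        simpa [substV, wV, wV_lift] using
          wP_subst hmn P (liftV 0 U) (k + 1) _ h (by simpa using hk)
  | .bang W, U, k, Γ, h, hk => by
      cases h with
      | bang hb h =>
        obtain ⟨hp, hc⟩ := bangE_cost n (bangCtx_entry hb k)
        have ih := Nat.mul_le_mul hmn (wV_subst hmn W U k _ h hp)
        simp only [substV, wV, hc]
        linarith
theorem wP_subst {m n : ℕ} (hmn : m ≤ n) : (R : Proc) → (U : Val) → (k : ℕ) → (Γ : Ctx) →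
    WfP Γ R → entry Γ k ≠ some .para →
    wP m (substP U k R) ≤ wP n R + markCost n (entry Γ k) * wV n U
  | .nil, U, k, Γ, _, _ => by simp [substP, wP]
  | .par P Q, U, k, Γ, h, hk => by
      cases h with
      | par hs h₁ h₂ =>
        obtain ⟨hp₁, hp₂, hc⟩ := splitE_cost n (split_entry hs k) hk
        have ih₁ := wP_subst hmn P U k _ h₁ hp₁
        have ih₂ := wP_subst hmn Q U k _ h₂ hp₂
        simp only [substP, wP, hc]
        linarith
  | .inp a P, U, k, Γ, h, hk => by
      cases h with
      | inp h =>
        have ih := wP_subst hmn P (liftV 0 U) (k + 1) _ h (by simpa using hk)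
        simp only [wV_lift, entry_succ] at ih
        simp only [substP, wP]
        omega
  | .binp a P, U, k, Γ, h, hk => by
      cases h with
      | binpBang h | binpPara h =>
        have ih := wP_subst hmn P (liftV 0 U) (k + 1) _ h (by simpa using hk)
        simp only [wV_lift, entry_succ] at ih
        simp only [substP, wP]
        omega
  | .out a V P, U, k, Γ, h, hk => by
      cases h with
      | out hs h₁ h₂ =>
        obtain ⟨hp₁, hp₂, hc⟩ := splitE_cost n (split_entry hs k) hk
        have ih₁ := wV_subst hmn V U k _ h₁ hp₁
        have ih₂ := wP_subst hmn P U k _ h₂ hp₂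
        simp only [substP, wP, hc]
        linarith
  | .nu a P, U, k, Γ, h, hk => by
      cases h with
      | nu h => simpa only [substP, wP] using wP_subst hmn P U k _ h hk
  | .app V W, U, k, Γ, h, hk => by
      cases h with
      | app hs h₁ h₂ =>
        obtain ⟨hp₁, hp₂, hc⟩ := splitE_cost n (split_entry hs k) hk
        have ih₁ := wV_subst hmn V U k _ h₁ hp₁
        have ih₂ := wV_subst hmn W U k _ h₂ hp₂
        simp only [substP, wP, hc]
        linarith
end

/-- Substitution lemma for the weight, !-case:  for a well-formed closed value
`V`, `n ≥ m ≥ 1`, and `R` (resp. `W`) well formed in a context whose variable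
`x` (de Bruijn index `0`) is !-marked,
`W_m(R[V/x]) ≤ W_n(R) + n·W_n(V)` (and similarly for values). -/
theorem weight_subst_bang {V : Val} (hV : WfV [] V) {n m : ℕ}
    (hm : 1 ≤ m) (hmn : m ≤ n) :
    (∀ (Γ : Ctx) (R : Proc), WfP (some SMark.bang :: Γ) R →
        wP m (substP V 0 R) ≤ wP n R + n * wV n V) ∧
    (∀ (Γ : Ctx) (W : Val), WfV (some SMark.bang :: Γ) W →
        wV m (substV V 0 W) ≤ wV n W + n * wV n V) := by
  refine ⟨fun Γ R h => ?_, fun Γ W h => ?_⟩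
  · simpa [markCost] using wP_subst hmn R V 0 _ h (by simp)
  · simpa [markCost] using wV_subst hmn W V 0 _ h (by simp)
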